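/- arXiv:2109.06697 — 4 statements merged into one kernel-verified Lean document; each statement's English description precedes it below -/
import Mathlib

section
/- Convergence of the Lyapunov value to zero (Lemma 1, stability of the certificate value): Let V : E → ℝ be differentiable with 0 ≤ V y for all y ∈ E, let λ > 0, and suppose the CLBF decrease condition for V, λ, and the policy π holds on E. Then along every closed-loop trajectory x : ℝ → E, the function t ↦ V (x t) tends to 0 as t → ∞. -/
open Filter

theorem clbf_value_tendsto_zero {n ℓ : ℕ}
    (f : EuclideanSpace ℝ (Fin n) → EuclideanSpace ℝ (Fin n))
    (g : EuclideanSpace ℝ (Fin n) →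
      (EuclideanSpace ℝ (Fin ℓ) →L[ℝ] EuclideanSpace ℝ (Fin n)))
    (π : EuclideanSpace ℝ (Fin n) → EuclideanSpace ℝ (Fin ℓ))
    (V : EuclideanSpace ℝ (Fin n) → ℝ) (hV : Differentiable ℝ V)
    (hVpos : ∀ y, 0 ≤ V y)
    (lam : ℝ) (hlam : 0 < lam)
    (hdec : ∀ y, (fderiv ℝ V y) (f y + g y (π y)) + lam * V y ≤ 0)
    (x : ℝ → EuclideanSpace ℝ (Fin n))
    (hx : ∀ t ≥ (0 : ℝ), HasDerivAt x (f (x t) + g (x t) (π (x t))) t) :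
    Tendsto (fun t => V (x t)) atTop (nhds 0) := by
  have hd : ∀ t ≥ (0 : ℝ), HasDerivAt (fun t => Real.exp (lam * t) * V (x t))
      (Real.exp (lam * t) * (lam * 1) * V (x t) +
        Real.exp (lam * t) * (fderiv ℝ V (x t)) (f (x t) + g (x t) (π (x t)))) t := by
    intro t ht
    have h1 : HasDerivAt (fun t => V (x t))
        ((fderiv ℝ V (x t)) (f (x t) + g (x t) (π (x t)))) t :=
      (hV (x t)).hasFDerivAt.comp_hasDerivAt t (hx t ht)
    have h2 : HasDerivAt (fun t : ℝ => Real.exp (lam * t)) (Real.exp (lam * t) * (lam * 1)) t :=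
      ((hasDerivAt_id t).const_mul lam).exp
    exact h2.mul h1
  have hanti : AntitoneOn (fun t => Real.exp (lam * t) * V (x t)) (Set.Ici 0) := by
    apply antitoneOn_of_deriv_nonpos (convex_Ici 0)
    · intro t ht
      exact (hd t ht).continuousAt.continuousWithinAt
    · intro t ht
      exact (hd t (interior_subset ht)).differentiableAt.differentiableWithinAt
    · intro t ht
      rw [(hd t (interior_subset ht)).deriv]
      have := mul_nonpos_of_nonneg_of_nonpos (Real.exp_pos (lam * t)).le (hdec (x t))
      linarith
  have hlim : Tendsto (fun t => Real.exp (-(lam * t)) * V (x 0)) atTop (nhds 0) := by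
    have h : Tendsto (fun t => Real.exp (-(lam * t))) atTop (nhds 0) :=
      Real.tendsto_exp_neg_atTop_nhds_zero.comp (tendsto_id.const_mul_atTop hlam)
    simpa using h.mul_const (V (x 0))
  refine tendsto_of_tendsto_of_tendsto_of_le_of_le' tendsto_const_nhds hlim
    (Eventually.of_forall fun t => hVpos (x t)) ?_
  filter_upwards [eventually_ge_atTop (0 : ℝ)] with t ht
  have h := hanti (Set.mem_Ici.2 le_rfl) (Set.mem_Ici.2 ht) ht
  simp only [mul_zero, Real.exp_zero, one_mul] at h
  have h3 := mul_le_mul_of_nonneg_left h (Real.exp_pos (-(lam * t))).le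
  rwa [← mul_assoc, ← Real.exp_add, neg_add_cancel, Real.exp_zero, one_mul] at h3
end

section
/- Scenario reduction for the robust CLBF constraint (core of the proof of Theorem 2): Fix y ∈ E, u ∈ U, a function V : E → ℝ differentiable at y, and λ > 0. Let the dynamics be affine in the parameter θ as in the parametric model, and let θ₀, …, θ_m ∈ EuclideanSpace ℝ (Fin r) be finitely many scenarios. If for every i ∈ Fin (m+1), (fderiv ℝ V y) (f_{θ_i} y + g_{θ_i} y u) + λ * V y ≤ 0, then for every θ in the convex hull of {θ₀, …, θ_m}, (fderiv ℝ V y) (f_θ y + g_θ y u) + λ * V y ≤ 0. -/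
theorem rclbf_scenario_reduction {n ℓ r m : ℕ}
    (f₀ : EuclideanSpace ℝ (Fin n) → EuclideanSpace ℝ (Fin n))
    (fP : Fin r → EuclideanSpace ℝ (Fin n) → EuclideanSpace ℝ (Fin n))
    (g₀ : EuclideanSpace ℝ (Fin n) →
      (EuclideanSpace ℝ (Fin ℓ) →L[ℝ] EuclideanSpace ℝ (Fin n)))
    (gP : Fin r → EuclideanSpace ℝ (Fin n) →
      (EuclideanSpace ℝ (Fin ℓ) →L[ℝ] EuclideanSpace ℝ (Fin n)))
    (y : EuclideanSpace ℝ (Fin n)) (u : EuclideanSpace ℝ (Fin ℓ))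
    (V : EuclideanSpace ℝ (Fin n) → ℝ) (hV : DifferentiableAt ℝ V y)
    (lam : ℝ) (hlam : 0 < lam)
    (θs : Fin (m + 1) → EuclideanSpace ℝ (Fin r))
    (h : ∀ i : Fin (m + 1),
      (fderiv ℝ V y) ((f₀ y + ∑ j, θs i j • fP j y) +
        (g₀ y + ∑ j, θs i j • gP j y) u) + lam * V y ≤ 0) :
    ∀ θ ∈ convexHull ℝ (Set.range θs),
      (fderiv ℝ V y) ((f₀ y + ∑ j, θ j • fP j y) +
        (g₀ y + ∑ j, θ j • gP j y) u) + lam * V y ≤ 0 := by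
  have key : ∀ θ : EuclideanSpace ℝ (Fin r),
      (fderiv ℝ V y) ((f₀ y + ∑ j, θ j • fP j y) +
        (g₀ y + ∑ j, θ j • gP j y) u) + lam * V y =
      (fderiv ℝ V y (f₀ y) + fderiv ℝ V y (g₀ y u) + lam * V y) +
        ∑ j, θ j * (fderiv ℝ V y (fP j y) + fderiv ℝ V y (gP j y u)) := by
    intro θ
    simp only [map_add, map_sum, map_smul, ContinuousLinearMap.add_apply,
      ContinuousLinearMap.sum_apply, ContinuousLinearMap.smul_apply, smul_eq_mul, mul_add,
      Finset.sum_add_distrib]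
    ring
  simp only [key] at h ⊢
  generalize fderiv ℝ V y (f₀ y) + fderiv ℝ V y (g₀ y u) + lam * V y = c at h ⊢
  intro θ hθ
  refine convexHull_min (t := {θ : EuclideanSpace ℝ (Fin r) | c + ∑ j, θ j *
    (fderiv ℝ V y (fP j y) + fderiv ℝ V y (gP j y u)) ≤ 0}) ?_ ?_ hθ
  · rintro _ ⟨i, rfl⟩
    exact h i
  · intro a ha b hb s t hs ht hst
    simp only [Set.mem_setOf_eq] at ha hb ⊢
    simp only [PiLp.add_apply, PiLp.smul_apply, smul_eq_mul, add_mul, Finset.sum_add_distrib,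
      mul_assoc, ← Finset.mul_sum]
    have h1 := mul_nonpos_of_nonneg_of_nonpos hs ha
    have h2 := mul_nonpos_of_nonneg_of_nonpos ht hb
    have h3 : c = s * c + t * c := by rw [← add_mul, hst, one_mul]
    linarith
end

section
/- Robust stability of rCLBF-based control (stability part of Theorem 2): Let the dynamics be affine in the parameter θ as in the parametric model with scenarios θ₀, …, θ_m ∈ EuclideanSpace ℝ (Fin r). Let V : E → ℝ be differentiable, x_goal ∈ E with V x_goal = 0 and V y > 0 for all y ≠ x_goal, and λ > 0. Suppose the policy π : E → U satisfies, for every y ∈ E and every i ∈ Fin (m+1), (fderiv ℝ V y) (f_{θ_i} y + g_{θ_i} y (π y)) + λ * V y ≤ 0. Then for every θ in the convex hull of {θ₀, …, θ_m} and every trajectory x : ℝ → E with HasDerivAt x (f_θ (x t) + g_θ (x t) (π (x t))) t for all t ≥ 0: (i) V (x t) ≤ V (x 0) * Real.exp (-λ * t) for all t ≥ 0, and (ii) if moreover x t remains in a compact set K ⊆ E for all t ≥ 0, then x t → x_goal as t → ∞. -/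
open Filter

theorem rclbf_robust_stability {n ℓ r m : ℕ}
    (f₀ : EuclideanSpace ℝ (Fin n) → EuclideanSpace ℝ (Fin n))
    (fP : Fin r → EuclideanSpace ℝ (Fin n) → EuclideanSpace ℝ (Fin n))
    (g₀ : EuclideanSpace ℝ (Fin n) →
      (EuclideanSpace ℝ (Fin ℓ) →L[ℝ] EuclideanSpace ℝ (Fin n)))
    (gP : Fin r → EuclideanSpace ℝ (Fin n) →
      (EuclideanSpace ℝ (Fin ℓ) →L[ℝ] EuclideanSpace ℝ (Fin n)))
    (θs : Fin (m + 1) → EuclideanSpace ℝ (Fin r))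
    (V : EuclideanSpace ℝ (Fin n) → ℝ) (hV : Differentiable ℝ V)
    (x_goal : EuclideanSpace ℝ (Fin n))
    (hVgoal : V x_goal = 0)
    (hVpos : ∀ y, y ≠ x_goal → 0 < V y)
    (lam : ℝ) (hlam : 0 < lam)
    (π : EuclideanSpace ℝ (Fin n) → EuclideanSpace ℝ (Fin ℓ))
    (hdec : ∀ y, ∀ i : Fin (m + 1),
      (fderiv ℝ V y) ((f₀ y + ∑ j, θs i j • fP j y) +
        (g₀ y + ∑ j, θs i j • gP j y) (π y)) + lam * V y ≤ 0) :
    ∀ θ ∈ convexHull ℝ (Set.range θs),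
      ∀ x : ℝ → EuclideanSpace ℝ (Fin n),
        (∀ t ≥ (0 : ℝ), HasDerivAt x ((f₀ (x t) + ∑ j, θ j • fP j (x t)) +
          (g₀ (x t) + ∑ j, θ j • gP j (x t)) (π (x t))) t) →
        (∀ t ≥ (0 : ℝ), V (x t) ≤ V (x 0) * Real.exp (-lam * t)) ∧
        (∀ K : Set (EuclideanSpace ℝ (Fin n)), IsCompact K →
          (∀ t ≥ (0 : ℝ), x t ∈ K) → Tendsto x atTop (nhds x_goal)) := by
  intro θ hθ x hx
  have hdecθ : ∀ y, (fderiv ℝ V y) ((f₀ y + ∑ j, θ j • fP j y) +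
        (g₀ y + ∑ j, θ j • gP j y) (π y)) + lam * V y ≤ 0 := by
    intro y
    have key : ∀ η : EuclideanSpace ℝ (Fin r), (fderiv ℝ V y) ((f₀ y + ∑ j, η j • fP j y) +
        (g₀ y + ∑ j, η j • gP j y) (π y)) + lam * V y
        = ((fderiv ℝ V y) (f₀ y + g₀ y (π y)) + lam * V y)
          + ∑ j, η j * (fderiv ℝ V y) (fP j y + gP j y (π y)) := by
      intro η
      simp only [map_add, map_sum, map_smul, smul_eq_mul, mul_add, Finset.sum_add_distrib,
        ContinuousLinearMap.add_apply, ContinuousLinearMap.sum_apply,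
        ContinuousLinearMap.smul_apply]
      ring
    have hsub : convexHull ℝ (Set.range θs) ⊆ {η : EuclideanSpace ℝ (Fin r) |
        ((fderiv ℝ V y) (f₀ y + g₀ y (π y)) + lam * V y)
          + ∑ j, η j * (fderiv ℝ V y) (fP j y + gP j y (π y)) ≤ 0} := by
      apply convexHull_min
      · rintro _ ⟨i, rfl⟩
        have := hdec y i
        rw [key] at this
        exact this
      · intro p hp q hq a b ha hb hab
        simp only [Set.mem_setOf_eq] at hp hq ⊢
        have e : ∑ j, (a • p + b • q) j * (fderiv ℝ V y) (fP j y + gP j y (π y))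
          = a * ∑ j, p j * (fderiv ℝ V y) (fP j y + gP j y (π y))
            + b * ∑ j, q j * (fderiv ℝ V y) (fP j y + gP j y (π y)) := by
          rw [Finset.mul_sum, Finset.mul_sum, ← Finset.sum_add_distrib]
          refine Finset.sum_congr rfl fun j _ => ?_
          simp only [PiLp.add_apply, PiLp.smul_apply, smul_eq_mul]
          ring
        rw [e]
        have h1 := mul_nonpos_of_nonneg_of_nonpos ha hp
        have h2 := mul_nonpos_of_nonneg_of_nonpos hb hq
        obtain rfl : b = 1 - a := by linarith
        linarith
    rw [key]
    exact hsub hθ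
  have hnn : ∀ y, 0 ≤ V y := by
    intro y
    by_cases h : y = x_goal
    · rw [h, hVgoal]
    · exact (hVpos y h).le
  have hder : ∀ t ≥ (0 : ℝ), HasDerivAt (fun t => V (x t) * Real.exp (lam * t))
      ((fderiv ℝ V (x t)) ((f₀ (x t) + ∑ j, θ j • fP j (x t)) +
          (g₀ (x t) + ∑ j, θ j • gP j (x t)) (π (x t))) * Real.exp (lam * t)
        + V (x t) * (Real.exp (lam * t) * lam)) t := by
    intro t ht
    have h1 := (hV (x t)).hasFDerivAt.comp_hasDerivAt t (hx t ht)
    have h2 : HasDerivAt (fun t : ℝ => Real.exp (lam * t)) (Real.exp (lam * t) * lam) t := by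
      simpa using ((hasDerivAt_id t).const_mul lam).exp
    exact h1.mul h2
  have hanti : AntitoneOn (fun t => V (x t) * Real.exp (lam * t)) (Set.Ici 0) := by
    apply antitoneOn_of_deriv_nonpos (convex_Ici 0)
    · intro t ht
      exact (hder t ht).continuousAt.continuousWithinAt
    · intro t ht
      exact (hder t (interior_subset ht)).differentiableAt.differentiableWithinAt
    · intro t ht
      rw [(hder t (interior_subset ht)).deriv]
      have := mul_nonpos_of_nonneg_of_nonpos (Real.exp_pos (lam * t)).le (hdecθ (x t))
      linarith
  have hi : ∀ t ≥ (0 : ℝ), V (x t) ≤ V (x 0) * Real.exp (-lam * t) := by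
    intro t ht
    have h := hanti (Set.mem_Ici.2 le_rfl) (Set.mem_Ici.2 ht) ht
    simp only [mul_zero, Real.exp_zero, mul_one] at h
    rw [neg_mul, Real.exp_neg, ← div_eq_mul_inv, le_div_iff₀ (Real.exp_pos _)]
    exact h
  refine ⟨hi, fun K hK hxK => ?_⟩
  have hexp : Tendsto (fun t : ℝ => V (x 0) * Real.exp (-lam * t)) atTop (nhds 0) := by
    have h1 : Tendsto (fun t : ℝ => -lam * t) atTop atBot :=
      tendsto_id.const_mul_atTop_of_neg (neg_lt_zero.2 hlam)
    simpa using (Real.tendsto_exp_atBot.comp h1).const_mul (V (x 0))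
  have hV0 : Tendsto (fun t => V (x t)) atTop (nhds 0) :=
    tendsto_of_tendsto_of_tendsto_of_le_of_le' tendsto_const_nhds hexp
      (Eventually.of_forall fun t => hnn _) ((eventually_ge_atTop 0).mono hi)
  refine hK.tendsto_nhds_of_unique_mapClusterPt ((eventually_ge_atTop 0).mono hxK) ?_
  intro y _ hy
  by_contra hne
  have hc : MapClusterPt (V y) atTop (V ∘ x) := hy.continuousAt_comp hV.continuous.continuousAt
  have hz : V y = 0 := by
    have : (nhds (V y) ⊓ nhds 0).NeBot := hc.neBot.mono (inf_le_inf_left _ hV0)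
    exact eq_of_nhds_neBot this
  exact (hVpos y hne).ne' hz
end

section
/- Exponential stabilization under quadratic Lyapunov bounds (quantitative form of Lemma 1): Let V : E → ℝ be differentiable, x_goal ∈ E, λ > 0, and α₁, α₂ > 0 with α₁ * ‖y - x_goal‖^2 ≤ V y ≤ α₂ * ‖y - x_goal‖^2 for all y ∈ E. Suppose the CLBF decrease condition for V, λ, and the policy π holds on E. Then every closed-loop trajectory x : ℝ → E satisfies ‖x t - x_goal‖ ≤ Real.sqrt (α₂ / α₁) * ‖x 0 - x_goal‖ * Real.exp (-(λ / 2) * t) for all t ≥ 0. -/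
theorem clbf_exponential_stabilization {n ℓ : ℕ}
    (f : EuclideanSpace ℝ (Fin n) → EuclideanSpace ℝ (Fin n))
    (g : EuclideanSpace ℝ (Fin n) →
      (EuclideanSpace ℝ (Fin ℓ) →L[ℝ] EuclideanSpace ℝ (Fin n)))
    (π : EuclideanSpace ℝ (Fin n) → EuclideanSpace ℝ (Fin ℓ))
    (V : EuclideanSpace ℝ (Fin n) → ℝ) (hV : Differentiable ℝ V)
    (x_goal : EuclideanSpace ℝ (Fin n))
    (lam α₁ α₂ : ℝ) (hlam : 0 < lam) (hα₁ : 0 < α₁) (hα₂ : 0 < α₂)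
    (hbound : ∀ y, α₁ * ‖y - x_goal‖ ^ 2 ≤ V y ∧ V y ≤ α₂ * ‖y - x_goal‖ ^ 2)
    (hdec : ∀ y, (fderiv ℝ V y) (f y + g y (π y)) + lam * V y ≤ 0)
    (x : ℝ → EuclideanSpace ℝ (Fin n))
    (hx : ∀ t ≥ (0 : ℝ), HasDerivAt x (f (x t) + g (x t) (π (x t))) t) :
    ∀ t ≥ (0 : ℝ), ‖x t - x_goal‖ ≤
      Real.sqrt (α₂ / α₁) * ‖x 0 - x_goal‖ * Real.exp (-(lam / 2) * t) := by
  have hd : ∀ t ≥ (0 : ℝ), HasDerivAt (fun s => Real.exp (lam * s) * V (x s))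
      (Real.exp (lam * t) * (lam * 1) * V (x t) +
        Real.exp (lam * t) * (fderiv ℝ V (x t)) (f (x t) + g (x t) (π (x t)))) t := by
    intro t ht
    have h1 : HasDerivAt (fun s => V (x s))
        ((fderiv ℝ V (x t)) (f (x t) + g (x t) (π (x t)))) t :=
      (hV (x t)).hasFDerivAt.comp_hasDerivAt t (hx t ht)
    have h2 : HasDerivAt (fun s => Real.exp (lam * s)) (Real.exp (lam * t) * (lam * 1)) t :=
      ((hasDerivAt_id t).const_mul lam).exp
    exact h2.mul h1
  have hanti : AntitoneOn (fun s => Real.exp (lam * s) * V (x s)) (Set.Ici 0) := by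
    apply antitoneOn_of_deriv_nonpos (convex_Ici 0)
    · intro t ht
      exact (hd t ht).continuousAt.continuousWithinAt
    · intro t ht
      exact (hd t (interior_subset ht)).differentiableAt.differentiableWithinAt
    · intro t ht
      rw [(hd t (interior_subset ht)).deriv]
      nlinarith [mul_nonneg (Real.exp_pos (lam * t)).le (neg_nonneg.2 (hdec (x t)))]
  intro t ht
  have h0 : Real.exp (lam * t) * V (x t) ≤ V (x 0) := by
    simpa using hanti (Set.mem_Ici.2 le_rfl) (Set.mem_Ici.2 ht) ht
  have hE : Real.exp (lam * t) * Real.exp (-(lam / 2) * t) ^ 2 = 1 := by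
    rw [← Real.exp_nat_mul, ← Real.exp_add, Real.exp_eq_one_iff]
    push_cast
    ring
  refine (sq_le_sq₀ (by positivity) (by positivity)).1 ?_
  rw [mul_pow, mul_pow, Real.sq_sqrt (by positivity), div_mul_eq_mul_div, div_mul_eq_mul_div,
    le_div_iff₀ hα₁]
  have h3 := (hbound (x t)).1
  have h4 := (hbound (x 0)).2
  have h5 : V (x t) = (Real.exp (lam * t) * V (x t)) * Real.exp (-(lam / 2) * t) ^ 2 := by
    rw [mul_right_comm, hE, one_mul]
  calc ‖x t - x_goal‖ ^ 2 * α₁ ≤ V (x t) := by linarith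
    _ = _ := h5
    _ ≤ _ := mul_le_mul_of_nonneg_right (h0.trans h4) (by positivity)
end
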